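/- If F : ℝ → ℝ is continuous and ε ≥ 0, then the function ψ^ε(β) = 2 + ε F(1/E(β) − 2) is continuous on the interval [2, ∞). -/

import Mathlib

/-- The orbit of `1` under the β-map `T_β(x) = βx mod 1`: `t₀ = 1`,
`t_{n+1} = β t_n − ⌊β t_n⌋`. -/
noncomputable def betaOrbit (β : ℝ) : ℕ → ℝ
  | 0 => 1
  | n + 1 => Int.fract (β * betaOrbit β n)

/-- `E(β) = (∑ t_n(β)²/(2βⁿ)) / (∑ t_n(β)/βⁿ)`, the expectation of the unique acim of
the β-map. -/
noncomputable def Ebeta (β : ℝ) : ℝ :=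
  (∑' n : ℕ, (betaOrbit β n) ^ 2 / (2 * β ^ n)) / (∑' n : ℕ, betaOrbit β n / β ^ n)

/-- `ψ^ε(β) = 2 + ε F(1/E(β) − 2)`. -/
noncomputable def psi (ε : ℝ) (F : ℝ → ℝ) (β : ℝ) : ℝ :=
  2 + ε * F (1 / Ebeta β - 2)

/-- Left limits of the orbit. -/
noncomputable def leftOrbit (β : ℝ) : ℕ → ℝ
  | 0 => 1
  | n + 1 => β * leftOrbit β n - ((⌈β * leftOrbit β n⌉ - 1 : ℤ) : ℝ)

lemma betaOrbit_mem (β : ℝ) (n : ℕ) : 0 ≤ betaOrbit β n ∧ betaOrbit β n ≤ 1 := by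
  cases n with
  | zero => simp [betaOrbit]
  | succ n => exact ⟨Int.fract_nonneg _, (Int.fract_lt_one _).le⟩

lemma leftOrbit_mem (β : ℝ) (n : ℕ) : 0 < leftOrbit β n ∧ leftOrbit β n ≤ 1 := by
  cases n with
  | zero => simp [leftOrbit]
  | succ n =>
    have h1 := Int.le_ceil (β * leftOrbit β n)
    have h2 := Int.ceil_lt_add_one (β * leftOrbit β n)
    simp only [leftOrbit]
    push_cast
    constructor <;> linarith

open Filter Topology

lemma right_tendsto (β : ℝ) (hβ : 2 ≤ β) (n : ℕ) :
    Tendsto (fun b => betaOrbit b n) (𝓝[≥] β) (𝓝[≥] (betaOrbit β n)) := by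
  induction n with
  | zero =>
    simp only [betaOrbit]
    exact tendsto_nhdsWithin_iff.2 ⟨tendsto_const_nhds, by simp⟩
  | succ n ih =>
    obtain ⟨h1, h2⟩ := tendsto_nhdsWithin_iff.1 ih
    have hid : Tendsto (fun b : ℝ => b) (𝓝[≥] β) (𝓝 β) := tendsto_id.mono_left nhdsWithin_le_nhds
    have hm : Tendsto (fun b => b * betaOrbit b n) (𝓝[≥] β) (𝓝 (β * betaOrbit β n)) := hid.mul h1
    have hge : ∀ᶠ b in 𝓝[≥] β, β * betaOrbit β n ≤ b * betaOrbit b n := by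
      filter_upwards [h2, self_mem_nhdsWithin] with b hb hb'
      exact mul_le_mul hb' hb (betaOrbit_mem _ _).1 (by have := Set.mem_Ici.1 hb'; linarith)
    have hw : Tendsto (fun b => b * betaOrbit b n) (𝓝[≥] β) (𝓝[≥] (β * betaOrbit β n)) :=
      tendsto_nhdsWithin_iff.2 ⟨hm, hge⟩
    have hf := tendsto_pure.1 ((tendsto_floor_right_pure_floor (β * betaOrbit β n)).comp hw)
    have heq : ∀ᶠ b in 𝓝[≥] β,
        b * betaOrbit b n - (⌊β * betaOrbit β n⌋ : ℝ) = betaOrbit b (n + 1) := by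
      filter_upwards [hf] with b hb
      simp only [Function.comp] at hb
      simp only [betaOrbit, Int.fract, hb]
    refine tendsto_nhdsWithin_iff.2 ⟨?_, ?_⟩
    · exact (hm.sub_const _).congr' heq
    · filter_upwards [heq, hge] with b hb hb'
      rw [← hb]
      simp only [betaOrbit, Int.fract, Set.mem_Ici]
      linarith

lemma left_tendsto (β : ℝ) (hβ : 2 ≤ β) (n : ℕ) :
    Tendsto (fun b => betaOrbit b n) (𝓝[<] β) (𝓝[≤] (leftOrbit β n)) := by
  induction n with
  | zero =>
    simp only [betaOrbit, leftOrbit]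
    exact tendsto_nhdsWithin_iff.2 ⟨tendsto_const_nhds, by simp⟩
  | succ n ih =>
    obtain ⟨h1, h2⟩ := tendsto_nhdsWithin_iff.1 ih
    have hid : Tendsto (fun b : ℝ => b) (𝓝[<] β) (𝓝 β) := tendsto_id.mono_left nhdsWithin_le_nhds
    have hm : Tendsto (fun b => b * betaOrbit b n) (𝓝[<] β) (𝓝 (β * leftOrbit β n)) := hid.mul h1
    have hlt : ∀ᶠ b in 𝓝[<] β, b * betaOrbit b n < β * leftOrbit β n := by
      filter_upwards [h2, self_mem_nhdsWithin] with b hb hb'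
      have hb1 : b < β := hb'
      have hb2 : betaOrbit b n ≤ leftOrbit β n := hb
      have := (leftOrbit_mem β n).1
      have h4 := (betaOrbit_mem b n).1
      rcases le_total 0 b with h0 | h0
      · exact (mul_le_mul_of_nonneg_left hb2 h0).trans_lt (mul_lt_mul_of_pos_right hb1 this)
      · exact (mul_nonpos_of_nonpos_of_nonneg h0 h4).trans_lt (mul_pos (by linarith) this)
    have hw : Tendsto (fun b => b * betaOrbit b n) (𝓝[<] β) (𝓝[<] (β * leftOrbit β n)) :=
      tendsto_nhdsWithin_iff.2 ⟨hm, hlt⟩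
    have hf := tendsto_pure.1 ((tendsto_floor_left_pure_ceil_sub_one (β * leftOrbit β n)).comp hw)
    have heq : ∀ᶠ b in 𝓝[<] β,
        b * betaOrbit b n - ((⌈β * leftOrbit β n⌉ - 1 : ℤ) : ℝ) = betaOrbit b (n + 1) := by
      filter_upwards [hf] with b hb
      simp only [Function.comp] at hb
      simp only [betaOrbit, Int.fract, hb]
    refine tendsto_nhdsWithin_iff.2 ⟨?_, ?_⟩
    · exact (hm.sub_const _).congr' heq
    · filter_upwards [heq, hlt] with b hb hb'
      rw [← hb]
      simp only [leftOrbit, Set.mem_Iic]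
      linarith

lemma term_bound (g : ℝ → ℝ) (hg : ∀ x, 0 ≤ x → x ≤ 1 → |g x| ≤ 1) (b x : ℝ) (hb : 2 ≤ b)
    (h0 : 0 ≤ x) (h1 : x ≤ 1) (n : ℕ) : ‖g x / b ^ n‖ ≤ (1 / 2 : ℝ) ^ n := by
  rw [norm_div, Real.norm_eq_abs, Real.norm_eq_abs, abs_of_pos (by positivity : 0 < b ^ n),
    one_div_pow]
  exact div_le_div₀ zero_le_one (hg x h0 h1) (by positivity)
    (pow_le_pow_left₀ (by norm_num) hb n)

lemma sum_tendsto (g : ℝ → ℝ) (hgc : Continuous g) (hg : ∀ x, 0 ≤ x → x ≤ 1 → |g x| ≤ 1)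
    (β : ℝ) (hβ : 2 ≤ β) (l : Filter ℝ) (hl : l ≤ 𝓝 β) (hl2 : ∀ᶠ b in l, 2 ≤ b) (u : ℕ → ℝ)
    (hu : ∀ n, Tendsto (fun b => betaOrbit b n) l (𝓝 (u n))) :
    Tendsto (fun b => ∑' n, g (betaOrbit b n) / b ^ n) l (𝓝 (∑' n, g (u n) / β ^ n)) := by
  refine tendsto_tsum_of_dominated_convergence (bound := fun n => (1 / 2 : ℝ) ^ n)
    summable_geometric_two ?_ ?_
  · intro n
    have hid : Tendsto (fun b : ℝ => b) l (𝓝 β) := hl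
    exact ((hgc.tendsto _).comp (hu n)).div (hid.pow n) (by positivity)
  · filter_upwards [hl2] with b hb n
    exact term_bound g hg b _ hb (betaOrbit_mem _ _).1 (betaOrbit_mem _ _).2 n

lemma left_eq (β : ℝ) (n : ℕ) (h : ∀ k ≤ n, betaOrbit β k ≠ 0) :
    leftOrbit β n = betaOrbit β n := by
  induction n with
  | zero => rfl
  | succ n ih =>
    have ih := ih (fun k hk => h k (by omega))
    have h1 := h (n + 1) le_rfl
    simp only [betaOrbit] at h1
    simp only [leftOrbit, betaOrbit, ih]
    have hc : ⌈β * betaOrbit β n⌉ = ⌊β * betaOrbit β n⌋ + 1 := by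
      rw [Int.ceil_eq_iff]
      have := Int.lt_floor_add_one (β * betaOrbit β n)
      have h3 := lt_of_le_of_ne (Int.fract_nonneg (β * betaOrbit β n)) (Ne.symm h1)
      rw [Int.fract] at h3
      push_cast
      constructor <;> linarith
    rw [hc, Int.fract]
    push_cast
    ring

lemma left_scale (β : ℝ) (hβ : 2 ≤ β) : ∃ c : ℝ, c ≠ 0 ∧ ∀ g : ℝ → ℝ, g 0 = 0 →
    (∀ x, 0 ≤ x → x ≤ 1 → |g x| ≤ 1) →
    ∑' n, g (betaOrbit β n) / β ^ n = c * ∑' n, g (leftOrbit β n) / β ^ n := by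
  classical
  by_cases h : ∃ N, betaOrbit β N = 0
  · set N := Nat.find h with hN
    have hN0 : betaOrbit β N = 0 := Nat.find_spec h
    have hmin : ∀ k < N, betaOrbit β k ≠ 0 := fun k hk => Nat.find_min h hk
    have hlt : ∀ k < N, leftOrbit β k = betaOrbit β k := fun k hk =>
      left_eq β k (fun j hj => hmin j (by omega))
    obtain ⟨M, hM⟩ : ∃ M, N = M + 1 := by
      cases hNN : N with
      | zero => rw [hNN] at hN0; simp [betaOrbit] at hN0
      | succ M => exact ⟨M, rfl⟩
    have hzero : ∀ k, betaOrbit β (k + N) = 0 := by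
      intro k
      induction k with
      | zero => simpa using hN0
      | succ k ih =>
        rw [show k + 1 + N = (k + N) + 1 by ring]
        simp [betaOrbit, ih]
    have hper : ∀ k, leftOrbit β (k + N) = leftOrbit β k := by
      intro k
      induction k with
      | zero =>
        rw [zero_add]
        rw [hM] at hN0 ⊢
        simp only [betaOrbit, Int.fract_eq_zero_iff] at hN0
        obtain ⟨z, hz⟩ := hN0
        simp only [leftOrbit, hlt M (by omega), ← hz]
        simp
      | succ k ih =>
        rw [show k + 1 + N = (k + N) + 1 by ring]
        simp only [leftOrbit, ih]
    refine ⟨1 - (β ^ N)⁻¹, ?_, ?_⟩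
    · have : 1 < β ^ N := one_lt_pow₀ (by linarith) (by omega)
      have := inv_lt_one_of_one_lt₀ this
      linarith
    · intro g g0 hg
      have s1 : Summable fun n => g (betaOrbit β n) / β ^ n :=
        Summable.of_norm_bounded summable_geometric_two
          (fun n => term_bound g hg β _ hβ (betaOrbit_mem _ _).1 (betaOrbit_mem _ _).2 n)
      have s2 : Summable fun n => g (leftOrbit β n) / β ^ n :=
        Summable.of_norm_bounded summable_geometric_two
          (fun n => term_bound g hg β _ hβ (leftOrbit_mem _ _).1.le (leftOrbit_mem _ _).2 n)
      have e1 := s1.sum_add_tsum_nat_add N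
      have e2 := s2.sum_add_tsum_nat_add N
      have e3 : ∑' i, g (betaOrbit β (i + N)) / β ^ (i + N) = 0 := by simp [hzero, g0]
      have e4 : ∑' i, g (leftOrbit β (i + N)) / β ^ (i + N)
          = (β ^ N)⁻¹ * ∑' i, g (leftOrbit β i) / β ^ i := by
        rw [← tsum_mul_left]
        refine tsum_congr fun i => ?_
        rw [hper, pow_add]
        field_simp
      have e5 : ∑ i ∈ Finset.range N, g (leftOrbit β i) / β ^ i
          = ∑ i ∈ Finset.range N, g (betaOrbit β i) / β ^ i :=
        Finset.sum_congr rfl fun i hi => by rw [hlt i (Finset.mem_range.1 hi)]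
      rw [e3] at e1
      rw [e4, e5] at e2
      linarith
  · push Not at h
    refine ⟨1, one_ne_zero, fun g _ _ => ?_⟩
    rw [one_mul]
    exact tsum_congr fun n => by rw [left_eq β n fun k _ => h k]

lemma sum_pos (g : ℝ → ℝ) (hg0 : ∀ x, 0 ≤ x → 0 ≤ g x) (hg1 : 0 < g 1)
    (hg : ∀ x, 0 ≤ x → x ≤ 1 → |g x| ≤ 1) (β : ℝ) (hβ : 2 ≤ β) (u : ℕ → ℝ) (u0 : u 0 = 1)
    (hu : ∀ n, 0 ≤ u n ∧ u n ≤ 1) : 0 < ∑' n, g (u n) / β ^ n := by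
  have s : Summable fun n => g (u n) / β ^ n :=
    Summable.of_norm_bounded summable_geometric_two
      (fun n => term_bound g hg β _ hβ (hu n).1 (hu n).2 n)
  refine s.tsum_pos (fun n => div_nonneg (hg0 _ (hu n).1) (by positivity)) 0 ?_
  simpa [u0] using hg1

lemma Ebeta_eq (β : ℝ) : Ebeta β = (∑' n, (fun x : ℝ => x ^ 2 / 2) (betaOrbit β n) / β ^ n) /
    (∑' n, (fun x : ℝ => x) (betaOrbit β n) / β ^ n) := by
  simp only [Ebeta, div_div]

lemma Ebeta_cont : ContinuousOn Ebeta (Set.Ici (2:ℝ)) := by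
  intro β hβ
  have hβ : 2 ≤ β := hβ
  have b1 : ∀ x : ℝ, 0 ≤ x → x ≤ 1 → |(fun x : ℝ => x ^ 2 / 2) x| ≤ 1 := by
    intro x h0 h1
    simp only
    rw [abs_of_nonneg (by positivity)]
    nlinarith
  have b2 : ∀ x : ℝ, 0 ≤ x → x ≤ 1 → |(fun x : ℝ => x) x| ≤ 1 := by
    intro x h0 h1
    simp only
    rwa [abs_of_nonneg h0]
  have c1 : Continuous (fun x : ℝ => x ^ 2 / 2) := by fun_prop
  have c2 : Continuous (fun x : ℝ => x) := continuous_id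
  have key : ∀ (l : Filter ℝ) (u : ℕ → ℝ), l ≤ 𝓝 β → (∀ᶠ b in l, 2 ≤ b) → u 0 = 1 →
      (∀ n, 0 ≤ u n ∧ u n ≤ 1) → (∀ n, Tendsto (fun b => betaOrbit b n) l (𝓝 (u n))) →
      Tendsto Ebeta l (𝓝 ((∑' n, (fun x : ℝ => x ^ 2 / 2) (u n) / β ^ n) /
        (∑' n, (fun x : ℝ => x) (u n) / β ^ n))) := by
    intro l u hl hl2 u0 hu ht
    rw [show Ebeta = _ from funext Ebeta_eq]
    exact (sum_tendsto _ c1 b1 β hβ l hl hl2 u ht).div (sum_tendsto _ c2 b2 β hβ l hl hl2 u ht)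
      (sum_pos _ (fun x h => h) one_pos b2 β hβ u u0 hu).ne'
  have hsplit : 𝓝[Set.Ici 2] β ≤ (𝓝[<] β ⊓ 𝓟 (Set.Ici 2)) ⊔ (𝓝[≥] β ⊓ 𝓟 (Set.Ici 2)) := by
    rw [← inf_sup_right, nhdsLT_sup_nhdsGE]
    exact le_rfl
  have h2 : ∀ l : Filter ℝ, ∀ᶠ b in l ⊓ 𝓟 (Set.Ici 2), (2:ℝ) ≤ b := fun l =>
    (mem_inf_of_right (mem_principal_self _) : Set.Ici (2:ℝ) ∈ _)
  refine Tendsto.mono_left (Tendsto.sup ?_ ?_) hsplit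
  · have := key (𝓝[<] β ⊓ 𝓟 (Set.Ici 2)) (leftOrbit β) (inf_le_left.trans nhdsWithin_le_nhds)
      (h2 _) rfl (fun n => ⟨(leftOrbit_mem β n).1.le, (leftOrbit_mem β n).2⟩)
      (fun n => ((left_tendsto β hβ n).mono_right nhdsWithin_le_nhds).mono_left inf_le_left)
    obtain ⟨c, hc, hs⟩ := left_scale β hβ
    rw [Ebeta_eq β, hs _ (by simp) b1, hs _ rfl b2, mul_div_mul_left _ _ hc]
    exact this
  · have := key (𝓝[≥] β ⊓ 𝓟 (Set.Ici 2)) (betaOrbit β) (inf_le_left.trans nhdsWithin_le_nhds)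
      (h2 _) rfl (betaOrbit_mem β)
      (fun n => ((right_tendsto β hβ n).mono_right nhdsWithin_le_nhds).mono_left inf_le_left)
    rw [Ebeta_eq β]
    exact this

lemma Ebeta_ne (β : ℝ) (hβ : 2 ≤ β) : Ebeta β ≠ 0 := by
  rw [Ebeta_eq]
  refine (div_pos (sum_pos (fun x : ℝ => x ^ 2 / 2) (fun x _ => by positivity) (by norm_num) ?_ β hβ _ rfl
    (betaOrbit_mem β)) (sum_pos (fun x : ℝ => x)
    (fun x h => h) one_pos ?_ β hβ _ rfl (betaOrbit_mem β))).ne'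
  · intro x h0 h1
    rw [abs_of_nonneg (by positivity)]
    nlinarith
  · intro x h0 h1
    rwa [abs_of_nonneg h0]

/-- `ψ^ε` is continuous on `[2,∞)` whenever `F` is continuous. -/
theorem stmt6 (F : ℝ → ℝ) (hF : Continuous F) (ε : ℝ) (hε : 0 ≤ ε) :
    ContinuousOn (psi ε F) (Set.Ici (2:ℝ)) := by
  unfold psi
  have h : ContinuousOn (fun β => 1 / Ebeta β - 2) (Set.Ici (2:ℝ)) :=
    (continuousOn_const.div Ebeta_cont (fun β hβ => Ebeta_ne β hβ)).sub continuousOn_const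
  exact continuousOn_const.add (continuousOn_const.mul (hF.comp_continuousOn h))
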